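/- arXiv:1604.03220 — 2 statements merged into one kernel-verified Lean document; each statement's English description precedes it below -/
import Mathlib

section
/- Monomial representation in the (p,q)-Bernstein basis: let n ≥ 1, let p, q be reals with 0 < q < p, and let 0 ≤ i ≤ n. Then for every real t, t^i = Σ_{k=i}^{n} p^{i(n−k)} ( [k choose i]_{p,q} / [n choose i]_{p,q} ) B_k^n(t;p,q). -/
/-!
The term at `k = i + j` equals `t ^ i` times the basis function `B_j^{n-i}(t;p,q)`: the three
binomial coefficients combine to `[n-i choose j]_{p,q}`, and the powers of `p` to the normalisation
in degree `n - i`. So the representation of `t ^ i` reduces to `∑ j, B_j^{n-i} = 1`.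

That partition of unity is a Chu–Vandermonde identity for `(x ⊖ y)^n = ∏_{s < n} (p^s x - q^s y)`,
which after division by factorials reads
`∑_{a+b=n} (y ⊖ z)^a / [a]! * (x ⊖ y)^b / [b]! = (x ⊖ z)^n / [n]!`; take `(x, y, z) = (1, t, 0)`.
Multiplying the sum for `n + 1` by `[a+b] = q^b [a] + p^a [b]` lowers `a` in one half and `b` in
the other, and leaves `p^n x - q^n z` times the sum for `n`, because
`q^b (p^a y - q^a z) + p^a (p^b x - q^b y) = p^(a+b) x - q^(a+b) z`.
-/

/-- The (p,q)-integer `[n]_{p,q} = Σ_{j=0}^{n-1} p^{n-1-j} q^j`. -/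
noncomputable def pqInt (p q : ℝ) (n : ℕ) : ℝ :=
  ∑ j ∈ Finset.range n, p ^ (n - 1 - j) * q ^ j

/-- The (p,q)-factorial `[n]_{p,q}! = ∏_{j=1}^{n} [j]_{p,q}`. -/
noncomputable def pqFact (p q : ℝ) : ℕ → ℝ
  | 0 => 1
  | n + 1 => pqFact p q n * pqInt p q (n + 1)

/-- The (p,q)-binomial coefficient `[n choose k]_{p,q}`. -/
noncomputable def pqBinom (p q : ℝ) (n k : ℕ) : ℝ :=
  pqFact p q n / (pqFact p q k * pqFact p q (n - k))

/-- The (p,q)-Bernstein basis function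
`B_k^n(t;p,q) = p^{k(k-1)/2 - n(n-1)/2} [n choose k]_{p,q} t^k ∏_{s=0}^{n-k-1} (p^s - q^s t)`. -/
noncomputable def pqBernstein (p q : ℝ) (n k : ℕ) (t : ℝ) : ℝ :=
  p ^ (k * (k - 1) / 2) / p ^ (n * (n - 1) / 2) * pqBinom p q n k * t ^ k *
    ∏ s ∈ Finset.range (n - k), (p ^ s - q ^ s * t)

open Finset

section PQCalculus

variable {p q : ℝ} {n : ℕ}

theorem pqInt_zero (p q : ℝ) : pqInt p q 0 = 0 := sum_range_zero _

theorem pqInt_add (p q : ℝ) (a b : ℕ) :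
    pqInt p q (a + b) = q ^ b * pqInt p q a + p ^ a * pqInt p q b := by
  unfold pqInt
  rw [add_comm a b, sum_range_add, mul_sum, mul_sum, add_comm]
  congr 1 <;> refine sum_congr rfl fun j hj => ?_ <;> rw [mem_range] at hj
  · rw [show b + a - 1 - (b + j) = a - 1 - j by lia]
    ring
  · rw [show b + a - 1 - j = a + (b - 1 - j) by lia]
    ring

theorem pqInt_pos (hp : 0 < p) (hq : 0 < q) (hn : n ≠ 0) : 0 < pqInt p q n :=
  sum_pos (fun _ _ => by positivity) (nonempty_range_iff.mpr hn)

theorem pqFact_eq_prod (p q : ℝ) (n : ℕ) :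
    pqFact p q n = ∏ j ∈ range n, pqInt p q (j + 1) := by
  induction n with
  | zero => rfl
  | succ n ih => rw [pqFact, ih, prod_range_succ]

theorem pqFact_pos (hp : 0 < p) (hq : 0 < q) (n : ℕ) : 0 < pqFact p q n := by
  rw [pqFact_eq_prod]
  exact prod_pos fun j _ => pqInt_pos hp hq j.succ_ne_zero

theorem pqFact_ne_zero_iff : pqFact p q n ≠ 0 ↔ ∀ j < n, pqInt p q (j + 1) ≠ 0 := by
  simp only [pqFact_eq_prod, prod_ne_zero_iff, mem_range]

theorem pqFact_ne_zero_of_le {k : ℕ} (hkn : k ≤ n) (hn : pqFact p q n ≠ 0) :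
    pqFact p q k ≠ 0 :=
  pqFact_ne_zero_iff.mpr fun j hj => pqFact_ne_zero_iff.mp hn j (hj.trans_le hkn)

theorem pqBinom_div_mul_pqBinom {i k : ℕ} (hik : i ≤ k) (hkn : k ≤ n) (hn : pqFact p q n ≠ 0) :
    pqBinom p q k i / pqBinom p q n i * pqBinom p q n k = pqBinom p q (n - i) (k - i) := by
  have hk := pqFact_ne_zero_of_le hkn hn
  have hi := pqFact_ne_zero_of_le (hik.trans hkn) hn
  simp only [pqBinom, Nat.sub_sub_sub_cancel_right hik]
  field_simp

end PQCalculus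

section DividedPower

variable {p q : ℝ} {n : ℕ}

/-- The divided `(p,q)`-power `(x ⊖ y)^n / [n]_{p,q}!`, where
`(x ⊖ y)^n = ∏_{s=0}^{n-1} (p^s x - q^s y)`. Dividing by the factorial makes the sums over the
`(p,q)`-Bernstein basis convolutions. -/
noncomputable def pqDividedPow (p q x y : ℝ) (n : ℕ) : ℝ :=
  (∏ s ∈ range n, (p ^ s * x - q ^ s * y)) / pqFact p q n

theorem pqDividedPow_zero_right (p q x : ℝ) (n : ℕ) :
    pqDividedPow p q x 0 n = p ^ (n * (n - 1) / 2) * x ^ n / pqFact p q n := by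
  simp only [pqDividedPow, mul_zero, sub_zero]
  rw [prod_mul_distrib, prod_pow_eq_pow_sum, sum_range_id, prod_const, card_range]

theorem pqInt_mul_pqDividedPow_succ (hn : pqInt p q (n + 1) ≠ 0) (x y : ℝ) :
    pqInt p q (n + 1) * pqDividedPow p q x y (n + 1) =
      (p ^ n * x - q ^ n * y) * pqDividedPow p q x y n := by
  rw [pqDividedPow, prod_range_succ, pqFact, mul_div_mul_comm, ← pqDividedPow]
  field_simp

theorem pqInt_mul_sum_antidiagonal_succ_pqDividedPow_mul (hn : pqFact p q (n + 1) ≠ 0) (x y z : ℝ) :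
    pqInt p q (n + 1) *
        ∑ ab ∈ antidiagonal (n + 1), pqDividedPow p q y z ab.1 * pqDividedPow p q x y ab.2 =
      (p ^ n * x - q ^ n * z) *
        ∑ ab ∈ antidiagonal n, pqDividedPow p q y z ab.1 * pqDividedPow p q x y ab.2 := by
  set D := pqDividedPow p q
  have hD {a : ℕ} (ha : a < n + 1) (u v : ℝ) :
      pqInt p q (a + 1) * D u v (a + 1) = (p ^ a * u - q ^ a * v) * D u v a :=
    pqInt_mul_pqDividedPow_succ (pqFact_ne_zero_iff.mp hn a ha) u v
  calc
    _ = ∑ ab ∈ antidiagonal (n + 1), q ^ ab.2 * (pqInt p q ab.1 * D y z ab.1) * D x y ab.2 +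
          ∑ ab ∈ antidiagonal (n + 1), p ^ ab.1 * D y z ab.1 * (pqInt p q ab.2 * D x y ab.2) := by
      rw [mul_sum, ← sum_add_distrib]
      refine sum_congr rfl fun ab hab => ?_
      rw [← mem_antidiagonal.mp hab, pqInt_add]
      ring
    _ = ∑ ab ∈ antidiagonal n,
            q ^ ab.2 * (pqInt p q (ab.1 + 1) * D y z (ab.1 + 1)) * D x y ab.2 +
          ∑ ab ∈ antidiagonal n,
            p ^ ab.1 * D y z ab.1 * (pqInt p q (ab.2 + 1) * D x y (ab.2 + 1)) := by
      rw [Nat.sum_antidiagonal_succ, Nat.sum_antidiagonal_succ']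
      simp only [pqInt_zero, zero_mul, mul_zero, zero_add]
    _ = _ := by
      rw [mul_sum, ← sum_add_distrib]
      refine sum_congr rfl fun ab hab => ?_
      rw [hD (Nat.antidiagonal.fst_lt hab), hD (Nat.antidiagonal.snd_lt hab),
        ← mem_antidiagonal.mp hab]
      ring

theorem sum_antidiagonal_pqDividedPow_mul (hn : pqFact p q n ≠ 0) (x y z : ℝ) :
    ∑ ab ∈ antidiagonal n, pqDividedPow p q y z ab.1 * pqDividedPow p q x y ab.2 =
      pqDividedPow p q x z n := by
  induction n with
  | zero => simp [pqDividedPow, pqFact]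
  | succ n ih =>
    have hint : pqInt p q (n + 1) ≠ 0 := pqFact_ne_zero_iff.mp hn n n.lt_succ_self
    apply mul_left_cancel₀ hint
    rw [pqInt_mul_sum_antidiagonal_succ_pqDividedPow_mul hn, ih (pqFact_ne_zero_of_le n.le_succ hn),
      pqInt_mul_pqDividedPow_succ hint]

end DividedPower

section Bernstein

variable {p q : ℝ} {n : ℕ}

theorem pqBernstein_eq_pqDividedPow (p q : ℝ) (n k : ℕ) (t : ℝ) :
    pqBernstein p q n k t = pqFact p q n / p ^ (n * (n - 1) / 2) *
      (pqDividedPow p q t 0 k * pqDividedPow p q 1 t (n - k)) := by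
  rw [pqDividedPow_zero_right, pqBernstein, pqBinom, pqDividedPow]
  simp only [mul_one]
  ring

theorem sum_range_pqBernstein (hp : p ≠ 0) (hn : pqFact p q n ≠ 0) (t : ℝ) :
    ∑ k ∈ range (n + 1), pqBernstein p q n k t = 1 := by
  simp only [pqBernstein_eq_pqDividedPow, ← mul_sum]
  rw [← Nat.sum_antidiagonal_eq_sum_range_succ
      (fun a b => pqDividedPow p q t 0 a * pqDividedPow p q 1 t b),
    sum_antidiagonal_pqDividedPow_mul hn, pqDividedPow_zero_right, one_pow, mul_one]
  field_simp

theorem triangle_add (i j : ℕ) :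
    (i + j) * (i + j - 1) / 2 = i * (i - 1) / 2 + j * (j - 1) / 2 + i * j := by
  rw [← sum_range_id, ← sum_range_id, ← sum_range_id, sum_range_add, sum_add_distrib, sum_const,
    card_range, smul_eq_mul]
  ring

theorem pow_mul_pow_triangle_div_pow_triangle {i k : ℕ} (hp : p ≠ 0) (hik : i ≤ k) (hkn : k ≤ n) :
    p ^ (i * (n - k)) * (p ^ (k * (k - 1) / 2) / p ^ (n * (n - 1) / 2)) =
      p ^ ((k - i) * (k - i - 1) / 2) / p ^ ((n - i) * (n - i - 1) / 2) := by
  obtain ⟨a, rfl⟩ := Nat.exists_eq_add_of_le hik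
  obtain ⟨b, rfl⟩ := Nat.exists_eq_add_of_le hkn
  rw [add_tsub_cancel_left, add_tsub_cancel_left, add_assoc, add_tsub_cancel_left,
    triangle_add i a, triangle_add i (a + b)]
  field_simp
  ring

theorem pow_mul_pqBinom_div_mul_pqBernstein {i k : ℕ} (hp : p ≠ 0) (hik : i ≤ k) (hkn : k ≤ n)
    (hn : pqFact p q n ≠ 0) (t : ℝ) :
    p ^ (i * (n - k)) * (pqBinom p q k i / pqBinom p q n i) * pqBernstein p q n k t =
      t ^ i * pqBernstein p q (n - i) (k - i) t := by
  rw [pqBernstein, pqBernstein, ← pow_mul_pow_triangle_div_pow_triangle hp hik hkn,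
    ← pqBinom_div_mul_pqBinom hik hkn hn, Nat.sub_sub_sub_cancel_right hik,
    ← pow_mul_pow_sub t hik]
  ring

end Bernstein

theorem pq_monomial_representation_general {n i : ℕ} (hi : i ≤ n) {p q : ℝ} (hp : p ≠ 0)
    (hn : pqFact p q n ≠ 0) (t : ℝ) :
    t ^ i = ∑ k ∈ Icc i n,
      p ^ (i * (n - k)) * (pqBinom p q k i / pqBinom p q n i) * pqBernstein p q n k t := by
  calc
    _ = t ^ i * ∑ j ∈ range (n - i + 1), pqBernstein p q (n - i) j t := by
      rw [sum_range_pqBernstein hp (pqFact_ne_zero_of_le (n.sub_le i) hn), mul_one]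
    _ = ∑ k ∈ Icc i n, t ^ i * pqBernstein p q (n - i) (k - i) t := by
      rw [← mul_sum, ← Ico_add_one_right_eq_Icc, sum_Ico_eq_sum_range, Nat.sub_add_comm hi]
      simp only [add_tsub_cancel_left]
    _ = _ := sum_congr rfl fun k hk =>
      have ⟨hik, hkn⟩ := mem_Icc.mp hk
      (pow_mul_pqBinom_div_mul_pqBernstein hp hik hkn hn t).symm

/-- monomial representation in the (p,q)-Bernstein basis:
`t^i = Σ_{k=i}^{n} p^{i(n-k)} ([k choose i]_{p,q} / [n choose i]_{p,q}) B_k^n(t;p,q)`. -/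
theorem pq_monomial_representation (n i : ℕ) (hn : 1 ≤ n) (hi : i ≤ n)
    (p q : ℝ) (h0 : 0 < q) (hqp : q < p) (t : ℝ) :
    t ^ i = ∑ k ∈ Finset.Icc i n,
      p ^ (i * (n - k)) * (pqBinom p q k i / pqBinom p q n i) * pqBernstein p q n k t := by
  have hp : 0 < p := h0.trans hqp
  exact pq_monomial_representation_general hi hp.ne' (pqFact_pos hp h0 n).ne' t
end

section
/- Restriction of the blossom of a Bernstein basis function: let n ≥ 2, let p, q be reals with 0 < q < p, and let 0 ≤ i ≤ n−1. Let b_i^n : ℝ^n → ℝ be the (p,q)-blossom of B_i^n(·;p,q) regarded as a polynomial of degree at most n, and let b_i^{n−1} : ℝ^{n−1} → ℝ be the (p,q)-blossom of B_i^{n−1}(·;p,q) regarded as a polynomial of degree at most n−1. Then for all reals u_1, …, u_{n−1}, b_i^n(u_1, …, u_{n−1}, 0) = b_i^{n−1}(u_1/p, …, u_{n−1}/p). -/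
/-- The `k`-th elementary symmetric polynomial in `n` variables:
`φ_{n,k}(u_1, …, u_n) = Σ_{1 ≤ i_1 < … < i_k ≤ n} u_{i_1} ⋯ u_{i_k}`. -/
noncomputable def esymmEval (n k : ℕ) (u : Fin n → ℝ) : ℝ :=
  ∑ S ∈ Finset.powersetCard k (Finset.univ : Finset (Fin n)), ∏ i ∈ S, u i

/-- A function `f : ℝ^n → ℝ` is symmetric if it is invariant under all permutations
of its arguments. -/
def IsSymmetricFn (n : ℕ) (f : (Fin n → ℝ) → ℝ) : Prop :=
  ∀ (σ : Equiv.Perm (Fin n)) (u : Fin n → ℝ), f (fun i => u (σ i)) = f u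

/-- A function `f : ℝ^n → ℝ` is multiaffine if, fixing all variables except the `j`-th,
the resulting one-variable function is affine (degree at most one). -/
def IsMultiaffine (n : ℕ) (f : (Fin n → ℝ) → ℝ) : Prop :=
  ∀ (j : Fin n) (u : Fin n → ℝ), ∃ a b : ℝ,
    ∀ x : ℝ, f (Function.update u j x) = a * x + b

/-!
A symmetric multiaffine function is affine in its last argument, and the diagonal of length `n + 1`
is the diagonal of length `n` extended at either end. Hence freezing the first `n` arguments
on the diagonal gives an affine function known at two nodes, from which every other value
is interpolated (a de Casteljau step). By induction this shows that a blossom is determined by its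
diagonal values, and at the node `0` it reduces the theorem to the recurrence
`p^{n+1} B_k^{n+1}(q x) - q^{n+1} B_k^{n+1}(p x) = (p^{n+1} - q^{n+1}) B_k^n(q x)`.
-/

section Bernstein

variable {p q : ℝ}

lemma pow_ne_pow_of_abs_ne {n : ℕ} (hpq : |p| ≠ |q|) (hn : n ≠ 0) : p ^ n ≠ q ^ n := by
  intro h
  apply hpq
  rw [← pow_left_inj₀ (abs_nonneg p) (abs_nonneg q) hn, ← abs_pow, ← abs_pow, h]

lemma pqInt_mul_sub (p q : ℝ) (n : ℕ) : pqInt p q n * (p - q) = p ^ n - q ^ n := by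
  rw [← (Commute.all p q).geom_sum₂_mul n, pqInt, ← Finset.sum_range_reflect]
  congr 1
  refine Finset.sum_congr rfl fun j hj => ?_
  rw [Nat.sub_sub_self (Nat.le_sub_one_of_lt (Finset.mem_range.1 hj))]

lemma pqInt_ne_zero {n : ℕ} (h : p ^ n ≠ q ^ n) : pqInt p q n ≠ 0 := by
  intro h0
  have := pqInt_mul_sub p q n
  rw [h0, zero_mul] at this
  exact h (sub_eq_zero.1 this.symm)

lemma pqBinom_succ_mul_pqInt {n k : ℕ} (hk : k ≤ n) (h : pqInt p q (n + 1 - k) ≠ 0) :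
    pqBinom p q (n + 1) k * pqInt p q (n + 1 - k) = pqInt p q (n + 1) * pqBinom p q n k := by
  rw [Nat.succ_sub hk] at h ⊢
  rw [pqBinom, pqBinom, Nat.succ_sub hk, pqFact, pqFact, ← mul_assoc, div_mul_eq_mul_div,
    mul_div_mul_right _ _ h, mul_comm (pqFact p q n), mul_div_assoc]

/-- The `(p,q)`-power `(1 ⊖ t)^d = ∏_{s=0}^{d-1} (p^s - q^s t)`, the product occurring in the
Bernstein basis functions. -/
noncomputable def pqPower (p q : ℝ) (d : ℕ) (t : ℝ) : ℝ :=
  ∏ s ∈ Finset.range d, (p ^ s - q ^ s * t)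

lemma pqPower_succ (p q : ℝ) (d : ℕ) (t : ℝ) :
    pqPower p q (d + 1) t = pqPower p q d t * (p ^ d - q ^ d * t) :=
  Finset.prod_range_succ _ d

lemma pqPower_succ_mul_left (p q : ℝ) (d : ℕ) (x : ℝ) :
    pqPower p q (d + 1) (p * x) = p ^ d * (1 - p * x) * pqPower p q d (q * x) := by
  have factor (s : ℕ) : p ^ (s + 1) - q ^ (s + 1) * (p * x) = p * (p ^ s - q ^ s * (q * x)) := by
    ring
  simp only [pqPower, Finset.prod_range_succ', factor, Finset.prod_mul_distrib,
    Finset.prod_const, Finset.card_range, pow_zero, one_mul]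
  ring

lemma pqPower_succ_recurrence (p q : ℝ) (d : ℕ) (x : ℝ) :
    p ^ (d + 1) * pqPower p q (d + 1) (q * x) - q ^ (d + 1) * pqPower p q (d + 1) (p * x) =
      p ^ d * (p ^ (d + 1) - q ^ (d + 1)) * pqPower p q d (q * x) := by
  rw [pqPower_succ_mul_left, pqPower_succ]
  ring

lemma pqBernstein_eq_mul_pqPower (p q : ℝ) (n k : ℕ) (t : ℝ) :
    pqBernstein p q n k t = p ^ (k * (k - 1) / 2) / p ^ (n * (n - 1) / 2) * pqBinom p q n k *
      t ^ k * pqPower p q (n - k) t :=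
  rfl

lemma pqBernstein_succ_recurrence {n k : ℕ} (hk : k ≤ n) (hp : p ≠ 0)
    (h : pqInt p q (n + 1 - k) ≠ 0) (x : ℝ) :
    p ^ (n + 1) * pqBernstein p q (n + 1) k (q * x) -
        q ^ (n + 1) * pqBernstein p q (n + 1) k (p * x) =
      (p ^ (n + 1) - q ^ (n + 1)) * pqBernstein p q n k (q * x) := by
  have binom := pqBinom_succ_mul_pqInt hk h
  obtain ⟨d, rfl⟩ := Nat.exists_eq_add_of_le hk
  rw [Nat.succ_sub hk, Nat.add_sub_cancel_left] at binom
  simp only [pqBernstein_eq_mul_pqPower, Nat.triangle_succ, Nat.succ_sub hk,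
    Nat.add_sub_cancel_left]
  set c := p ^ (k * (k - 1) / 2) / p ^ ((k + d) * (k + d - 1) / 2) with hc
  rw [pow_add p _ (k + d), ← div_div, ← hc]
  calc
    _ = c / p ^ (k + d) * pqBinom p q (k + d + 1) k * (p * q * x) ^ k *
        (p ^ (d + 1) * pqPower p q (d + 1) (q * x) -
          q ^ (d + 1) * pqPower p q (d + 1) (p * x)) := by ring
    _ = c / p ^ (k + d) * pqBinom p q (k + d + 1) k * (p * q * x) ^ k *
        (p ^ d * (p ^ (d + 1) - q ^ (d + 1)) * pqPower p q d (q * x)) := by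
      rw [pqPower_succ_recurrence]
    _ = c * (pqBinom p q (k + d + 1) k * (p ^ (d + 1) - q ^ (d + 1))) * (q * x) ^ k *
        pqPower p q d (q * x) := by
      field_simp
      ring
    _ = c * ((p ^ (k + d + 1) - q ^ (k + d + 1)) * pqBinom p q (k + d) k) * (q * x) ^ k *
        pqPower p q d (q * x) := by
      rw [← pqInt_mul_sub, ← pqInt_mul_sub, ← mul_assoc (pqBinom _ _ _ _), binom]
      ring
    _ = _ := by ring

end Bernstein

section Restriction

variable {n : ℕ} {f : (Fin (n + 1) → ℝ) → ℝ}

lemma IsSymmetricFn.apply_cons (hf : IsSymmetricFn (n + 1) f) (x : ℝ) (v : Fin n → ℝ) :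
    f (Fin.cons x v) = f (Fin.snoc v x) := by
  rw [Fin.snoc_eq_cons_rotate]
  exact (hf (finRotate _) _).symm

lemma IsSymmetricFn.comp_snoc (hf : IsSymmetricFn (n + 1) f) (x : ℝ) :
    IsSymmetricFn n fun v => f (Fin.snoc v x) := by
  intro σ u
  change f _ = f _
  rw [← hf (finSuccEquivLast.symm.permCongr σ.optionCongr) (Fin.snoc u x)]
  congr 1
  funext j
  cases j using Fin.lastCases <;> simp

lemma IsMultiaffine.comp_snoc (hf : IsMultiaffine (n + 1) f) (x : ℝ) :
    IsMultiaffine n fun v => f (Fin.snoc v x) := by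
  intro j u
  simp only [Fin.snoc_update]
  exact hf j.castSucc (Fin.snoc u x)

lemma IsMultiaffine.snoc_interpolation (hf : IsMultiaffine (n + 1) f) (v : Fin n → ℝ)
    (x y z : ℝ) :
    (y - x) * f (Fin.snoc v z) = (y - z) * f (Fin.snoc v x) + (z - x) * f (Fin.snoc v y) := by
  obtain ⟨a, b, affine⟩ := hf (Fin.last n) (Fin.snoc v 0)
  simp only [Fin.update_snoc_last] at affine
  rw [affine, affine, affine]
  ring

end Restriction

lemma IsSymmetricFn.comp_div {n : ℕ} {f : (Fin n → ℝ) → ℝ} (hf : IsSymmetricFn n f) (c : ℝ) :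
    IsSymmetricFn n fun u => f fun j => u j / c :=
  fun σ u => hf σ fun j => u j / c

lemma IsMultiaffine.comp_div {n : ℕ} {f : (Fin n → ℝ) → ℝ} (hf : IsMultiaffine n f) (c : ℝ) :
    IsMultiaffine n fun u => f fun j => u j / c := by
  intro j u
  obtain ⟨a, b, affine⟩ := hf j fun k => u k / c
  refine ⟨a / c, b, fun x => ?_⟩
  have update_div : (fun k => Function.update u j x k / c) =
      Function.update (fun k => u k / c) j (x / c) :=
    Function.comp_update (· / c) u j x
  calc
    _ = f (Function.update (fun k => u k / c) j (x / c)) := congrArg f update_div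
    _ = a / c * x + b := by rw [affine]; ring

/-- The diagonal point `(p^{n-1} t, p^{n-2} q t, …, q^{n-1} t)` at which a `(p,q)`-blossom takes
the value of its polynomial at `t`; the coordinates are indexed from `0`. -/
noncomputable def pqDiag (p q : ℝ) (n : ℕ) (t : ℝ) : Fin n → ℝ :=
  fun j => p ^ (n - 1 - (j : ℕ)) * q ^ (j : ℕ) * t

/-- `f` is a `(p,q)`-blossom of degree `n` of `S`. That `S` is a polynomial of degree at most `n`
is not recorded, since it follows from the three fields. -/
structure IsPQBlossom (p q : ℝ) (n : ℕ) (S : ℝ → ℝ) (f : (Fin n → ℝ) → ℝ) : Prop where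
  isSymmetricFn : IsSymmetricFn n f
  isMultiaffine : IsMultiaffine n f
  apply_pqDiag : ∀ t, f (pqDiag p q n t) = S t

section Diagonal

variable {p q : ℝ} {n : ℕ}

lemma pqDiag_succ_eq_snoc (p q : ℝ) (n : ℕ) (t : ℝ) :
    pqDiag p q (n + 1) t = Fin.snoc (pqDiag p q n (p * t)) (q ^ n * t) := by
  funext j
  refine Fin.lastCases ?_ (fun j => ?_) j
  · simp [pqDiag]
  · have exponent : n + 1 - 1 - (j : ℕ) = n - 1 - j + 1 := by lia
    simp only [pqDiag, Fin.snoc_castSucc, Fin.val_castSucc, exponent]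
    ring

lemma pqDiag_succ_eq_cons (p q : ℝ) (n : ℕ) (t : ℝ) :
    pqDiag p q (n + 1) t = Fin.cons (p ^ n * t) (pqDiag p q n (q * t)) := by
  funext j
  refine Fin.cases ?_ (fun j => ?_) j
  · simp [pqDiag]
  · have exponent : n + 1 - 1 - ((j : ℕ) + 1) = n - 1 - j := by lia
    simp only [pqDiag, Fin.cons_succ, Fin.val_succ, exponent]
    ring

lemma pqDiag_mul_div {c : ℝ} (hc : c ≠ 0) (p q : ℝ) (n : ℕ) (t : ℝ) :
    (fun j => pqDiag p q n (c * t) j / c) = pqDiag p q n t := by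
  funext j
  simp only [pqDiag]
  field_simp

lemma deCasteljau_pqDiag {f : (Fin (n + 1) → ℝ) → ℝ} (hs : IsSymmetricFn (n + 1) f)
    (ha : IsMultiaffine (n + 1) f) (p q s z : ℝ) :
    (p ^ (n + 1) - q ^ (n + 1)) * s * f (Fin.snoc (pqDiag p q n (p * q * s)) z) =
      (p ^ (n + 1) * s - z) * f (pqDiag p q (n + 1) (q * s)) +
        (z - q ^ (n + 1) * s) * f (pqDiag p q (n + 1) (p * s)) := by
  have lower : f (pqDiag p q (n + 1) (q * s)) =
      f (Fin.snoc (pqDiag p q n (p * q * s)) (q ^ (n + 1) * s)) := by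
    rw [pqDiag_succ_eq_snoc, pow_succ, mul_assoc p, mul_assoc (q ^ n)]
  have upper : f (pqDiag p q (n + 1) (p * s)) =
      f (Fin.snoc (pqDiag p q n (p * q * s)) (p ^ (n + 1) * s)) := by
    rw [pqDiag_succ_eq_cons, hs.apply_cons, pow_succ, mul_left_comm q, ← mul_assoc p,
      mul_assoc (p ^ n)]
  rw [lower, upper, ← ha.snoc_interpolation, sub_mul]

-- At `t = 0` the two nodes of the interpolation coincide, so the induction only controls `t ≠ 0`.
lemma eq_of_pqDiag_eq (hp : p ≠ 0) (hq : q ≠ 0) (hpq : |p| ≠ |q|) {f g : (Fin n → ℝ) → ℝ}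
    (hfs : IsSymmetricFn n f) (hfa : IsMultiaffine n f)
    (hgs : IsSymmetricFn n g) (hga : IsMultiaffine n g)
    (h : ∀ t ≠ 0, f (pqDiag p q n t) = g (pqDiag p q n t)) : f = g := by
  induction n with
  | zero =>
    funext u
    rw [Subsingleton.elim u (pqDiag p q 0 1), h 1 one_ne_zero]
  | succ n ih =>
    have restrict (z : ℝ) : (fun v => f (Fin.snoc v z)) = fun v => g (Fin.snoc v z) := by
      refine ih (hfs.comp_snoc z) (hfa.comp_snoc z) (hgs.comp_snoc z) (hga.comp_snoc z)
        fun t ht => ?_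
      obtain ⟨s, rfl⟩ : ∃ s, t = p * q * s := ⟨t / (p * q), by field_simp⟩
      have hs : s ≠ 0 := right_ne_zero_of_mul ht
      refine mul_left_cancel₀
        (mul_ne_zero (sub_ne_zero.2 (pow_ne_pow_of_abs_ne hpq n.succ_ne_zero)) hs) ?_
      rw [deCasteljau_pqDiag hfs hfa, deCasteljau_pqDiag hgs hga, h _ (mul_ne_zero hq hs),
        h _ (mul_ne_zero hp hs)]
    funext u
    rw [← Fin.snoc_init_self u]
    exact congrFun (restrict _) _

end Diagonal

theorem pq_blossom_bernstein_restriction_general {m i : ℕ} (hi : i ≤ m) {p q : ℝ}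
    (hp : p ≠ 0) (hq : q ≠ 0) (hpq : |p| ≠ |q|)
    {bn : (Fin (m + 1) → ℝ) → ℝ} {bm : (Fin m → ℝ) → ℝ}
    (hbn : IsPQBlossom p q (m + 1) (pqBernstein p q (m + 1) i) bn)
    (hbm : IsPQBlossom p q m (pqBernstein p q m i) bm) (u : Fin m → ℝ) :
    bn (Fin.snoc u 0) = bm fun j => u j / p := by
  obtain ⟨hbns, hbna, hbnd⟩ := hbn
  obtain ⟨hbms, hbma, hbmd⟩ := hbm
  refine congrFun (eq_of_pqDiag_eq hp hq hpq (hbns.comp_snoc 0) (hbna.comp_snoc 0)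
    (hbms.comp_div p) (hbma.comp_div p) fun t ht => ?_) u
  obtain ⟨s, rfl⟩ : ∃ s, t = p * q * s := ⟨t / (p * q), by field_simp⟩
  have hs : s ≠ 0 := right_ne_zero_of_mul ht
  have h_pow : p ^ (m + 1) - q ^ (m + 1) ≠ 0 :=
    sub_ne_zero.2 (pow_ne_pow_of_abs_ne hpq m.succ_ne_zero)
  have h_int : pqInt p q (m + 1 - i) ≠ 0 := pqInt_ne_zero (pow_ne_pow_of_abs_ne hpq (by lia))
  have casteljau := deCasteljau_pqDiag hbns hbna p q s 0
  have recurrence := pqBernstein_succ_recurrence hi hp h_int s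
  rw [hbnd, hbnd] at casteljau
  rw [mul_assoc p, pqDiag_mul_div hp, hbmd, ← mul_assoc p]
  refine mul_left_cancel₀ (mul_ne_zero h_pow hs) ?_
  linear_combination casteljau + s * recurrence

/-- restriction of the blossom of a Bernstein basis function.  Writing the
degree as `n = m + 1` with `m ≥ 1` (so `n ≥ 2`) and `0 ≤ i ≤ n - 1 = m`: if `bn` is the
(p,q)-blossom of `B_i^{m+1}(·;p,q)` and `bm` is the (p,q)-blossom of `B_i^m(·;p,q)`, then
`bn(u_1, …, u_m, 0) = bm(u_1/p, …, u_m/p)`. -/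
theorem pq_blossom_bernstein_restriction (m : ℕ) (hm : 1 ≤ m) (i : ℕ) (hi : i ≤ m)
    (p q : ℝ) (h0 : 0 < q) (hqp : q < p)
    (bn : (Fin (m + 1) → ℝ) → ℝ) (bm : (Fin m → ℝ) → ℝ)
    (hbnsym : IsSymmetricFn (m + 1) bn) (hbnaff : IsMultiaffine (m + 1) bn)
    (hbndiag : ∀ t : ℝ, bn (fun j => p ^ (m - (j : ℕ)) * q ^ (j : ℕ) * t) =
      pqBernstein p q (m + 1) i t)
    (hbmsym : IsSymmetricFn m bm) (hbmaff : IsMultiaffine m bm)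
    (hbmdiag : ∀ t : ℝ, bm (fun j => p ^ (m - 1 - (j : ℕ)) * q ^ (j : ℕ) * t) =
      pqBernstein p q m i t) :
    ∀ u : Fin m → ℝ, bn (Fin.snoc u 0) = bm (fun j => u j / p) := by
  have hpq : |p| ≠ |q| := by
    rw [abs_of_pos (h0.trans hqp), abs_of_pos h0]
    exact hqp.ne'
  exact pq_blossom_bernstein_restriction_general hi (h0.trans hqp).ne' h0.ne' hpq
    ⟨hbnsym, hbnaff, hbndiag⟩ ⟨hbmsym, hbmaff, hbmdiag⟩
end
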